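/- For every h ∈ (−1/4, 0): h²·(4h+1)²·I₀'''(h) = (15/16)·(4h·I₀(h) + I₂(h)) and h²·(4h+1)²·I₂'''(h) = (15/16)·(4h·I₀(h) − 4h·I₂(h)); consequently, with ω(h) = I₂(h)/I₀(h) and ν(h) = I₂'''(h)/I₀'''(h), one has ν(h) = 4h·(1 − ω(h)) / (4h + ω(h)). -/

import Mathlib

/-!
With `s = √(1 + 4h)`, the substitution `x² = 1 + s sin θ` turns the radicand `2h + x² - x⁴/2` into
`s² cos² θ / 2` and removes the square-root singularities at the moving endpoints:
`I_k(h) = (s²/√2) F_{(k-1)/2}(s)`, where `F_p(s) = ∫_{-π/2}^{π/2} cos² θ (1 + s sin θ)^p dθ`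
(`AbI_eq`). For `0 < s < 1` one may differentiate `F_p` under the integral sign, and
`s sin θ = (1 + s sin θ) - 1` gives `F_p' = (p/s) (F_p - F_{p-1})` (`hasDerivAt_momF`). Integrating
the derivative of `cos³ θ (1 + s sin θ)^p` gives a three-term recursion in `p`
(`momF_recursion`), which for `p = -1/2` expresses `F_{-3/2}` through `F_{-1/2}` and `F_{1/2}`.
Hence `I₀` and `I₂` satisfy the Picard–Fuchs system
`4h(4h+1) I₀' = (12h+4) I₀ - 5 I₂`, `(4h+1) I₂' = 5 I₂ - I₀`.
Differentiating it twice yields `4h(4h+1) I₀'' = -3 I₀`, `4h(4h+1) I₂'' = 5 I₂ - 4 I₀` and then the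
third derivatives. The formula for `ν` follows upon dividing by `I₀ > 0`.
-/

open Set

/-- Lower endpoint of the oval projection: `x₋(h) = √(1 − √(1+4h))`. -/
noncomputable def xminus (h : ℝ) : ℝ := Real.sqrt (1 - Real.sqrt (1 + 4*h))

/-- Upper endpoint of the oval projection: `x₊(h) = √(1 + √(1+4h))`. -/
noncomputable def xplus (h : ℝ) : ℝ := Real.sqrt (1 + Real.sqrt (1 + 4*h))

/-- The Abelian integral `I_k(h) = 2∫_{x₋(h)}^{x₊(h)} x^k √(2h + x² − x⁴/2) dx`. -/
noncomputable def AbI (k : ℕ) (h : ℝ) : ℝ :=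
  2 * ∫ x in (xminus h)..(xplus h), x ^ k * Real.sqrt (2*h + x^2 - x^4/2)
/-! ### Trigonometric moments -/

/-- The moment `F_p(s) = ∫_{-π/2}^{π/2} cos² θ (1 + s sin θ)^p dθ`, with a real exponent `p`. -/
noncomputable def momF (p s : ℝ) : ℝ :=
  ∫ θ in (-(Real.pi / 2))..(Real.pi / 2), Real.cos θ ^ 2 * (1 + s * Real.sin θ) ^ p

lemma one_add_mul_sin_pos {s : ℝ} (hs : s ∈ Ioo (0:ℝ) 1) (θ : ℝ) : 0 < 1 + s * Real.sin θ := by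
  have := Real.neg_one_le_sin θ
  nlinarith [hs.1, hs.2]

lemma continuous_momF_integrand {s : ℝ} (hs : s ∈ Ioo (0:ℝ) 1) (p : ℝ) :
    Continuous fun θ : ℝ => Real.cos θ ^ 2 * (1 + s * Real.sin θ) ^ p := by
  refine (by fun_prop : Continuous fun θ : ℝ => Real.cos θ ^ 2).mul ?_
  exact (by fun_prop : Continuous fun θ : ℝ => 1 + s * Real.sin θ).rpow_const
    fun θ => Or.inl (one_add_mul_sin_pos hs θ).ne'

lemma hasDerivAt_momF {s : ℝ} (hs : s ∈ Ioo (0:ℝ) 1) (p : ℝ) :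
    HasDerivAt (momF p) (p / s * (momF p s - momF (p - 1) s)) s := by
  obtain ⟨a, ha0, has⟩ := exists_between hs.1
  obtain ⟨b, hsb, hb1⟩ := exists_between hs.2
  have hsub : ∀ x ∈ Icc a b, x ∈ Ioo (0:ℝ) 1 := fun x hx =>
    ⟨ha0.trans_le hx.1, hx.2.trans_lt hb1⟩
  -- A constant bound for the `s`-derivative of the integrand, by compactness.
  have hcont : ContinuousOn (fun z : ℝ × ℝ => Real.cos z.2 ^ 2 *
      (Real.sin z.2 * p * (1 + z.1 * Real.sin z.2) ^ (p - 1)))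
      (Icc a b ×ˢ uIcc (-(Real.pi / 2)) (Real.pi / 2)) := by
    refine (by fun_prop : Continuous fun z : ℝ × ℝ => Real.cos z.2 ^ 2).continuousOn.mul
      ((by fun_prop : Continuous fun z : ℝ × ℝ => Real.sin z.2 * p).continuousOn.mul ?_)
    exact (by fun_prop : Continuous fun z : ℝ × ℝ => 1 + z.1 * Real.sin z.2).continuousOn.rpow_const
      fun z hz => Or.inl (one_add_mul_sin_pos (hsub z.1 hz.1) z.2).ne'
  obtain ⟨C, hC⟩ := (isCompact_Icc.prod isCompact_uIcc).exists_bound_of_continuousOn hcont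
  have key := (intervalIntegral.hasDerivAt_integral_of_dominated_loc_of_deriv_le
    (μ := MeasureTheory.volume) (a := -(Real.pi / 2)) (b := Real.pi / 2) (x₀ := s)
    (s := Icc a b) (bound := fun _ => C)
    (F := fun s θ => Real.cos θ ^ 2 * (1 + s * Real.sin θ) ^ p)
    (F' := fun s θ => Real.cos θ ^ 2 * (Real.sin θ * p * (1 + s * Real.sin θ) ^ (p - 1)))
    (Icc_mem_nhds has hsb) ?_ ?_ ?_ ?_ ?_ ?_).2
  · have hint : (∫ θ in (-(Real.pi / 2))..(Real.pi / 2),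
        Real.cos θ ^ 2 * (Real.sin θ * p * (1 + s * Real.sin θ) ^ (p - 1)))
        = p / s * (momF p s - momF (p - 1) s) := by
      rw [momF, momF, ← intervalIntegral.integral_sub
        ((continuous_momF_integrand hs p).intervalIntegrable _ _)
        ((continuous_momF_integrand hs (p - 1)).intervalIntegrable _ _),
        ← intervalIntegral.integral_const_mul]
      congr 1
      funext θ
      have hw := one_add_mul_sin_pos hs θ
      have h1 : (1 + s * Real.sin θ) ^ p
          = (1 + s * Real.sin θ) ^ (p - 1) * (1 + s * Real.sin θ) := by
        rw [← Real.rpow_add_one hw.ne', sub_add_cancel]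
      have := hs.1.ne'
      rw [h1]
      field_simp
      ring
    rw [hint] at key
    exact key
  · filter_upwards [Icc_mem_nhds has hsb] with x hx
    exact (continuous_momF_integrand (hsub x hx) p).aestronglyMeasurable
  · exact (continuous_momF_integrand hs p).intervalIntegrable _ _
  · have : Continuous fun θ : ℝ => (Real.sin θ * p) *
        (Real.cos θ ^ 2 * (1 + s * Real.sin θ) ^ (p - 1)) :=
      (by fun_prop : Continuous fun θ : ℝ => Real.sin θ * p).mul
        (continuous_momF_integrand hs (p - 1))
    refine Continuous.aestronglyMeasurable (this.congr fun θ => ?_)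
    ring
  · filter_upwards with θ hθ x hx
    exact hC (x, θ) ⟨hx, uIoc_subset_uIcc hθ⟩
  · exact intervalIntegrable_const
  · filter_upwards with θ hθ x hx
    have hw := one_add_mul_sin_pos (hsub x hx) θ
    have h1 : HasDerivAt (fun x : ℝ => 1 + x * Real.sin θ) (Real.sin θ) x := by
      simpa using ((hasDerivAt_id x).mul_const (Real.sin θ)).const_add 1
    exact (h1.rpow_const (Or.inl hw.ne')).const_mul _

/-- The boundary terms of `cos³ θ (1 + s sin θ)^p` vanish at `±π/2`, so its derivative integrates
to zero; `s² cos² θ = s² - (w - 1)²` with `w = 1 + s sin θ` rewrites that derivative in powers of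
`w`. -/
lemma momF_recursion {s : ℝ} (hs : s ∈ Ioo (0:ℝ) 1) (p : ℝ) :
    (-3 - p) * momF (p + 1) s + (3 + 2 * p) * momF p s
      + p * (s ^ 2 - 1) * momF (p - 1) s = 0 := by
  have hi : ∀ q c : ℝ, IntervalIntegrable
      (fun θ => c * (Real.cos θ ^ 2 * (1 + s * Real.sin θ) ^ q)) MeasureTheory.volume
      (-(Real.pi / 2)) (Real.pi / 2) := fun q c =>
    ((continuous_momF_integrand hs q).intervalIntegrable _ _).const_mul c
  have hF := intervalIntegral.integral_eq_sub_of_hasDerivAt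
    (a := -(Real.pi / 2)) (b := Real.pi / 2)
    (f := fun θ => s * (Real.cos θ ^ 3 * (1 + s * Real.sin θ) ^ p))
    (f' := fun θ => (-3 - p) * (Real.cos θ ^ 2 * (1 + s * Real.sin θ) ^ (p + 1))
      + (3 + 2 * p) * (Real.cos θ ^ 2 * (1 + s * Real.sin θ) ^ p)
      + p * (s ^ 2 - 1) * (Real.cos θ ^ 2 * (1 + s * Real.sin θ) ^ (p - 1)))
    (fun θ _ => ?_) (((hi _ _).add (hi _ _)).add (hi _ _))
  · rw [intervalIntegral.integral_add ((hi _ _).add (hi _ _)) (hi _ _),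
      intervalIntegral.integral_add (hi _ _) (hi _ _), intervalIntegral.integral_const_mul,
      intervalIntegral.integral_const_mul, intervalIntegral.integral_const_mul] at hF
    simpa [momF] using hF
  · have hw := one_add_mul_sin_pos hs θ
    have h1 : HasDerivAt (fun θ : ℝ => 1 + s * Real.sin θ) (s * Real.cos θ) θ :=
      ((Real.hasDerivAt_sin θ).const_mul s).const_add 1
    have h2 := ((((Real.hasDerivAt_cos θ).pow 3).mul
      (h1.rpow_const (p := p) (Or.inl hw.ne'))).const_mul s)
    refine h2.congr_deriv ?_
    have e1 : (1 + s * Real.sin θ) ^ p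
        = (1 + s * Real.sin θ) ^ (p - 1) * (1 + s * Real.sin θ) := by
      rw [← Real.rpow_add_one hw.ne', sub_add_cancel]
    have e2 : (1 + s * Real.sin θ) ^ (p + 1)
        = (1 + s * Real.sin θ) ^ (p - 1) * (1 + s * Real.sin θ) * (1 + s * Real.sin θ) := by
      rw [Real.rpow_add_one hw.ne', e1]
    simp only [Pi.pow_apply]
    rw [e2, e1]
    generalize (1 + s * Real.sin θ) ^ (p - 1) = W
    have hc : Real.cos θ ^ 2 = 1 - Real.sin θ ^ 2 := Real.cos_sq' θ
    push_cast
    linear_combination (p * s ^ 2 * W * Real.cos θ ^ 2) * hc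

/-! ### Abelian integrals as moments and the Picard–Fuchs system -/

lemma sqrt_mem {h : ℝ} (hh : h ∈ Ioo (-(1:ℝ)/4) 0) : Real.sqrt (1 + 4*h) ∈ Ioo (0:ℝ) 1 := by
  refine ⟨Real.sqrt_pos.2 (by linarith [hh.1]), ?_⟩
  rw [Real.sqrt_lt' one_pos]
  linarith [hh.2]

/-- The substitution `x = √(1 + s sin θ)` with `s = √(1 + 4h)`. -/
lemma AbI_eq (k : ℕ) {h : ℝ} (hh : h ∈ Ioo (-(1:ℝ)/4) 0) :
    AbI k h = (1 + 4*h) / Real.sqrt 2 * momF (((k:ℝ) - 1) / 2) (Real.sqrt (1 + 4*h)) := by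
  have hs := sqrt_mem hh
  have hs2 : Real.sqrt (1 + 4*h) ^ 2 = 1 + 4*h := Real.sq_sqrt (by linarith [hh.1])
  rw [AbI, xminus, xplus]
  set s := Real.sqrt (1 + 4*h) with hsdef
  have hsub := intervalIntegral.integral_comp_mul_deriv
    (a := -(Real.pi / 2)) (b := Real.pi / 2)
    (f := fun θ => Real.sqrt (1 + s * Real.sin θ))
    (f' := fun θ => s * Real.cos θ / (2 * Real.sqrt (1 + s * Real.sin θ)))
    (g := fun x => x ^ k * Real.sqrt (2*h + x^2 - x^4/2))
    (fun θ _ => (((Real.hasDerivAt_sin θ).const_mul s).const_add 1).sqrt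
      (one_add_mul_sin_pos hs θ).ne')
    (Continuous.continuousOn (Continuous.div (by fun_prop) (by fun_prop) fun θ =>
      (mul_pos two_pos (Real.sqrt_pos.2 (one_add_mul_sin_pos hs θ))).ne'))
    (by fun_prop)
  have hl : 1 + s * Real.sin (-(Real.pi / 2)) = 1 - s := by
    rw [Real.sin_neg, Real.sin_pi_div_two]; ring
  have hr : 1 + s * Real.sin (Real.pi / 2) = 1 + s := by
    rw [Real.sin_pi_div_two, mul_one]
  simp only [hl, hr] at hsub
  rw [← hsub, momF, ← intervalIntegral.integral_const_mul, ← intervalIntegral.integral_const_mul]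
  refine intervalIntegral.integral_congr fun θ hθ => ?_
  rw [uIcc_of_le (by linarith [Real.pi_pos])] at hθ
  have hcos := Real.cos_nonneg_of_mem_Icc hθ
  have hw := one_add_mul_sin_pos hs θ
  have hsq := Real.sq_sqrt hw.le
  have h2 : 2*h + Real.sqrt (1 + s * Real.sin θ) ^ 2 - Real.sqrt (1 + s * Real.sin θ) ^ 4 / 2
      = (s * Real.cos θ) ^ 2 / 2 := by
    rw [show Real.sqrt (1 + s * Real.sin θ) ^ 4 = (Real.sqrt (1 + s * Real.sin θ) ^ 2) ^ 2 by ring,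
      hsq, mul_pow, Real.cos_sq']
    linear_combination (-(1:ℝ)/2) * hs2
  have hpow : Real.sqrt (1 + s * Real.sin θ) ^ k
      = (1 + s * Real.sin θ) ^ (((k:ℝ) - 1) / 2) * Real.sqrt (1 + s * Real.sin θ) := by
    rw [Real.sqrt_eq_rpow, ← Real.rpow_natCast, ← Real.rpow_mul hw.le, ← Real.rpow_add hw]
    congr 1
    ring
  have hsw := Real.sqrt_pos.2 hw
  have hq2 : (0:ℝ) < Real.sqrt 2 := Real.sqrt_pos.2 two_pos
  simp only [Function.comp_apply]
  rw [h2, Real.sqrt_div (sq_nonneg _), Real.sqrt_sq (mul_nonneg hs.1.le hcos), hpow, ← hs2]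
  field_simp

lemma hasDerivAt_AbI (k : ℕ) {h : ℝ} (hh : h ∈ Ioo (-(1:ℝ)/4) 0) :
    HasDerivAt (AbI k) (4 / Real.sqrt 2 * momF (((k:ℝ) - 1) / 2) (Real.sqrt (1 + 4*h))
      + ((k:ℝ) - 1) / Real.sqrt 2 * (momF (((k:ℝ) - 1) / 2) (Real.sqrt (1 + 4*h))
        - momF (((k:ℝ) - 1) / 2 - 1) (Real.sqrt (1 + 4*h)))) h := by
  have hs := sqrt_mem hh
  have hpos : 0 < 1 + 4*h := by linarith [hh.1]
  have h1 : HasDerivAt (fun h : ℝ => 1 + 4*h) 4 h := by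
    simpa using ((hasDerivAt_id h).const_mul 4).const_add 1
  have h3 := (h1.div_const (Real.sqrt 2)).mul
    ((hasDerivAt_momF hs (((k:ℝ) - 1) / 2)).comp h (h1.sqrt hpos.ne'))
  refine (h3.congr_of_eventuallyEq ?_).congr_deriv ?_
  · filter_upwards [Ioo_mem_nhds hh.1 hh.2] with x hx
    exact AbI_eq k hx
  · have hs2 : Real.sqrt (1 + 4*h) ^ 2 = 1 + 4*h := Real.sq_sqrt hpos.le
    have hq2 : (0:ℝ) < Real.sqrt 2 := Real.sqrt_pos.2 two_pos
    have := hs.1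
    simp only [Function.comp_apply]
    rw [← hs2, Real.sqrt_sq hs.1.le]
    field_simp
    ring

/-- Second Picard–Fuchs equation. For `k = 2` the derivative involves only `F_{1/2}` and `F_{-1/2}`,
so no reduction is needed. -/
lemma hasDerivAt_AbI_two {h : ℝ} (hh : h ∈ Ioo (-(1:ℝ)/4) 0) :
    HasDerivAt (AbI 2) ((5 * AbI 2 h - AbI 0 h) / (4*h + 1)) h := by
  refine (hasDerivAt_AbI 2 hh).congr_deriv ?_
  have hpos' : 4*h + 1 ≠ 0 := by linarith [hh.1]
  have hq2 : (0:ℝ) < Real.sqrt 2 := Real.sqrt_pos.2 two_pos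
  rw [AbI_eq 0 hh, AbI_eq 2 hh]
  norm_num
  field_simp
  ring

/-- First Picard–Fuchs equation; the recursion eliminates `F_{-3/2}`, using `s² - 1 = 4h`. -/
lemma hasDerivAt_AbI_zero {h : ℝ} (hh : h ∈ Ioo (-(1:ℝ)/4) 0) :
    HasDerivAt (AbI 0) (((12*h + 4) * AbI 0 h - 5 * AbI 2 h) / (4*h * (4*h + 1))) h := by
  refine (hasDerivAt_AbI 0 hh).congr_deriv ?_
  have hpos' : 4*h + 1 ≠ 0 := by linarith [hh.1]
  have hne : h ≠ 0 := hh.2.ne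
  have hs2 : Real.sqrt (1 + 4*h) ^ 2 = 1 + 4*h := Real.sq_sqrt (by linarith [hh.1])
  have hq2 : (0:ℝ) < Real.sqrt 2 := Real.sqrt_pos.2 two_pos
  have hrec := momF_recursion (sqrt_mem hh) (-(1/2))
  rw [hs2] at hrec
  rw [AbI_eq 0 hh, AbI_eq 2 hh]
  norm_num at hrec ⊢
  field_simp
  linear_combination (-8 * h - 2) * hrec

lemma AbI_zero_pos {h : ℝ} (hh : h ∈ Ioo (-(1:ℝ)/4) 0) : 0 < AbI 0 h := by
  rw [AbI_eq 0 hh]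
  have hs := sqrt_mem hh
  have hq2 : (0:ℝ) < Real.sqrt 2 := Real.sqrt_pos.2 two_pos
  refine mul_pos (div_pos (by linarith [hh.1]) hq2) ?_
  refine intervalIntegral.intervalIntegral_pos_of_pos_on
    ((continuous_momF_integrand hs _).intervalIntegrable _ _) (fun θ hθ => ?_)
    (by linarith [Real.pi_pos])
  exact mul_pos (pow_pos (Real.cos_pos_of_mem_Ioo hθ) 2)
    (Real.rpow_pos_of_pos (one_add_mul_sin_pos hs θ) _)

/-! ### Higher derivatives -/

/-- Formulas for the derivative valid on a whole open interval can be differentiated again. -/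
lemma iteratedDeriv_three_of_hasDerivAt {f f₁ f₂ f₃ : ℝ → ℝ} {a b : ℝ}
    (h1 : ∀ x ∈ Ioo a b, HasDerivAt f (f₁ x) x) (h2 : ∀ x ∈ Ioo a b, HasDerivAt f₁ (f₂ x) x)
    (h3 : ∀ x ∈ Ioo a b, HasDerivAt f₂ (f₃ x) x) {x : ℝ} (hx : x ∈ Ioo a b) :
    iteratedDeriv 3 f x = f₃ x := by
  have e1 : ∀ y ∈ Ioo a b, deriv (deriv f) y = f₂ y := fun y hy => by
    rw [Filter.EventuallyEq.deriv_eq (f := f₁)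
      (by filter_upwards [Ioo_mem_nhds hy.1 hy.2] with z hz using (h1 z hz).deriv)]
    exact (h2 y hy).deriv
  rw [iteratedDeriv_succ, iteratedDeriv_succ, iteratedDeriv_one,
    Filter.EventuallyEq.deriv_eq (f := f₂)
      (by filter_upwards [Ioo_mem_nhds hx.1 hx.2] with z hz using e1 z hz)]
  exact (h3 x hx).deriv

lemma hasDerivAt_quadratic (h : ℝ) :
    HasDerivAt (fun h : ℝ => 4*h * (4*h + 1)) (32*h + 4) h := by
  have h1 : HasDerivAt (fun h : ℝ => 4*h) 4 h := by
    simpa using (hasDerivAt_id h).const_mul (4:ℝ)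
  refine (h1.mul (h1.add_const 1)).congr_deriv ?_
  ring

lemma iteratedDeriv_AbI_zero {h : ℝ} (hh : h ∈ Ioo (-(1:ℝ)/4) 0) :
    iteratedDeriv 3 (AbI 0) h
      = 15 * (4*h * AbI 0 h + AbI 2 h) / (16 * h^2 * (4*h + 1)^2) := by
  refine iteratedDeriv_three_of_hasDerivAt
    (f₂ := fun h => -3 * AbI 0 h / (4*h * (4*h + 1)))
    (f₃ := fun h => 15 * (4*h * AbI 0 h + AbI 2 h) / (16 * h^2 * (4*h + 1)^2))
    (fun x hx => hasDerivAt_AbI_zero hx) (fun x hx => ?_) (fun x hx => ?_) hh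
  all_goals
    have hne : x ≠ 0 := hx.2.ne
    have hne' : 4*x + 1 ≠ 0 := by linarith [hx.1]
    have hne'' : x*4 + 1 ≠ 0 := by linarith [hx.1]
    have hq : 4*x * (4*x + 1) ≠ 0 := mul_ne_zero (mul_ne_zero four_ne_zero hne) hne'
  · have h12 : HasDerivAt (fun h : ℝ => 12*h + 4) 12 x := by
      simpa using ((hasDerivAt_id x).const_mul (12:ℝ)).add_const 4
    refine (((h12.mul (hasDerivAt_AbI_zero hx)).sub
      ((hasDerivAt_AbI_two hx).const_mul 5)).div (hasDerivAt_quadratic x) hq).congr_deriv ?_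
    simp only [Pi.mul_apply, Pi.sub_apply]
    field_simp
    ring
  · refine (((hasDerivAt_AbI_zero hx).const_mul (-3)).div
      (hasDerivAt_quadratic x) hq).congr_deriv ?_
    field_simp
    ring

lemma iteratedDeriv_AbI_two {h : ℝ} (hh : h ∈ Ioo (-(1:ℝ)/4) 0) :
    iteratedDeriv 3 (AbI 2) h
      = 15 * (4*h * AbI 0 h - 4*h * AbI 2 h) / (16 * h^2 * (4*h + 1)^2) := by
  refine iteratedDeriv_three_of_hasDerivAt
    (f₂ := fun h => (5 * AbI 2 h - 4 * AbI 0 h) / (4*h * (4*h + 1)))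
    (f₃ := fun h => 15 * (4*h * AbI 0 h - 4*h * AbI 2 h) / (16 * h^2 * (4*h + 1)^2))
    (fun x hx => hasDerivAt_AbI_two hx) (fun x hx => ?_) (fun x hx => ?_) hh
  all_goals
    have hne : x ≠ 0 := hx.2.ne
    have hne' : 4*x + 1 ≠ 0 := by linarith [hx.1]
    have hq : 4*x * (4*x + 1) ≠ 0 := mul_ne_zero (mul_ne_zero four_ne_zero hne) hne'
  · have h4 : HasDerivAt (fun h : ℝ => 4*h + 1) 4 x := by
      simpa using ((hasDerivAt_id x).const_mul (4:ℝ)).add_const 1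
    refine ((((hasDerivAt_AbI_two hx).const_mul 5).sub
      (hasDerivAt_AbI_zero hx)).div h4 hne').congr_deriv ?_
    simp only [Pi.sub_apply]
    field_simp
    ring
  · refine ((((hasDerivAt_AbI_two hx).const_mul 5).sub
      ((hasDerivAt_AbI_zero hx).const_mul 4)).div
      (hasDerivAt_quadratic x) hq).congr_deriv ?_
    simp only [Pi.sub_apply]
    field_simp
    ring

/-- Third derivatives of `I₀, I₂` expressed through `I₀, I₂`, and the resulting
formula `ν = 4h(1 − ω)/(4h + ω)` where `ω = I₂/I₀`, `ν = I₂'''/I₀'''`. -/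
theorem third_derivative_identities : ∀ h ∈ Set.Ioo (-(1:ℝ)/4) 0,
    h^2 * (4*h+1)^2 * iteratedDeriv 3 (AbI 0) h = (15/16) * (4*h * AbI 0 h + AbI 2 h) ∧
    h^2 * (4*h+1)^2 * iteratedDeriv 3 (AbI 2) h = (15/16) * (4*h * AbI 0 h - 4*h * AbI 2 h) ∧
    iteratedDeriv 3 (AbI 2) h / iteratedDeriv 3 (AbI 0) h =
      4*h * (1 - AbI 2 h / AbI 0 h) / (4*h + AbI 2 h / AbI 0 h) := by
  intro h hh
  have hne : h ≠ 0 := hh.2.ne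
  have hne' : 4*h + 1 ≠ 0 := by linarith [hh.1]
  have hne'' : h*4 + 1 ≠ 0 := by linarith [hh.1]
  have hI := (AbI_zero_pos hh).ne'
  rw [iteratedDeriv_AbI_zero hh, iteratedDeriv_AbI_two hh]
  refine ⟨by field_simp, by field_simp, ?_⟩
  have e1 : 15 * (4*h * AbI 0 h - 4*h * AbI 2 h) / (16 * h^2 * (4*h + 1)^2)
      = 4*h * (1 - AbI 2 h / AbI 0 h) * (15 * AbI 0 h / (16 * h^2 * (4*h + 1)^2)) := by
    field_simp
  have e2 : 15 * (4*h * AbI 0 h + AbI 2 h) / (16 * h^2 * (4*h + 1)^2)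
      = (4*h + AbI 2 h / AbI 0 h) * (15 * AbI 0 h / (16 * h^2 * (4*h + 1)^2)) := by
    field_simp
  -- Cancelling the common factor needs no hypothesis on the denominator `4h + ω`.
  rw [e1, e2, mul_div_mul_right]
  positivity
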